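/- arXiv:1511.02163 — 3 statements merged into one kernel-verified Lean document; each statement's English description precedes it below -/
import Mathlib

section
/- Let V be a finite set, let f be a positive polymatroid function on 2^V, let m ≥ 1, and let B₁, …, B_m ⊆ V. Define F(A) = Σ_{i=1}^m f(A △ B_i). Then for every A ⊆ V, m · min_{1 ≤ i ≤ m} F(B_i) ≤ 2(m − 1) · F(A). In particular, returning the best of B₁, …, B_m is a (2 − 2/m)-approximation for the unconstrained homogeneous minimization of F. -/
/-!
A monotone submodular `f` with `f ∅ = 0` makes `(A, B) ↦ f (A ∆ B)` a pseudometric, and in any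
pseudometric space the best of `n` points is a `(2 - 2 / n)`-approximate median: summing
`d(bᵢ, bⱼ) ≤ d(a, bᵢ) + d(a, bⱼ)` over the ordered pairs `i ≠ j` uses each `d(a, bᵢ)` exactly
`2 (n - 1)` times, and the minimum over `i` of `∑ⱼ d(bᵢ, bⱼ)` is at most the average.
-/

open Finset
open scoped symmDiff

section Median

variable {ι X : Type*} [PseudoMetricSpace X] {s : Finset ι} (b : ι → X) (a : X)

-- The coefficient is `#s - 2` rather than `#s` because the term `j = i` on the left vanishes.
theorem sum_dist_le_card_sub_two_mul_dist_add_sum_dist {i : ι} (hi : i ∈ s) :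
    ∑ j ∈ s, dist (b i) (b j) ≤ (#s - 2) * dist a (b i) + ∑ j ∈ s, dist a (b j) := by
  classical
  calc ∑ j ∈ s, dist (b i) (b j)
      = ∑ j ∈ s.erase i, dist (b i) (b j) := (sum_erase s (dist_self (b i))).symm
    _ ≤ ∑ j ∈ s.erase i, (dist a (b i) + dist a (b j)) :=
        sum_le_sum fun j _ => dist_triangle_left (b i) (b j) a
    _ = (#s - 1) * dist a (b i) + ∑ j ∈ s.erase i, dist a (b j) := by
        rw [sum_add_distrib, sum_const, nsmul_eq_mul, cast_card_erase_of_mem hi]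
    _ = (#s - 2) * dist a (b i) + ∑ j ∈ s, dist a (b j) := by
        rw [sum_erase_eq_sub hi]
        ring

theorem sum_sum_dist_le_two_mul_card_sub_one_mul_sum_dist :
    ∑ i ∈ s, ∑ j ∈ s, dist (b i) (b j) ≤ 2 * ((#s : ℝ) - 1) * ∑ i ∈ s, dist a (b i) :=
  calc ∑ i ∈ s, ∑ j ∈ s, dist (b i) (b j)
      ≤ ∑ i ∈ s, ((#s - 2) * dist a (b i) + ∑ j ∈ s, dist a (b j)) :=
        sum_le_sum fun _ hi => sum_dist_le_card_sub_two_mul_dist_add_sum_dist b a hi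
    _ = 2 * ((#s : ℝ) - 1) * ∑ i ∈ s, dist a (b i) := by
        rw [sum_add_distrib, ← mul_sum, sum_const, nsmul_eq_mul]
        ring

theorem card_mul_inf'_sum_dist_le (hs : s.Nonempty) :
    #s * s.inf' hs (fun i => ∑ j ∈ s, dist (b i) (b j)) ≤
      2 * ((#s : ℝ) - 1) * ∑ i ∈ s, dist a (b i) :=
  calc #s * s.inf' hs (fun i => ∑ j ∈ s, dist (b i) (b j))
      ≤ ∑ i ∈ s, ∑ j ∈ s, dist (b i) (b j) := by
        rw [← nsmul_eq_mul]
        exact card_nsmul_le_sum s _ _ fun _ hi => inf'_le _ hi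
    _ ≤ 2 * ((#s : ℝ) - 1) * ∑ i ∈ s, dist a (b i) :=
        sum_sum_dist_le_two_mul_card_sub_one_mul_sum_dist b a

end Median

theorem map_sup_le_add_of_submodular {α : Type*} [Lattice α] [OrderBot α] {f : α → ℝ}
    (hbot : f ⊥ = 0) (hmono : Monotone f)
    (hsubmod : ∀ x y, f (x ⊔ y) + f (x ⊓ y) ≤ f x + f y) (x y : α) :
    f (x ⊔ y) ≤ f x + f y := by
  have inf_nonneg : 0 ≤ f (x ⊓ y) := hbot ▸ hmono bot_le
  linarith [hsubmod x y]

section SymmDiff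

variable {α : Type*} [GeneralizedBooleanAlgebra α] {f : α → ℝ}

/-- The pseudometric `(x, y) ↦ f (x ∆ y)` induced by a monotone subadditive function `f` with
`f ⊥ = 0`. It is a definition rather than an instance because it depends on `f`. -/
abbrev symmDiffPseudoMetricSpace (hbot : f ⊥ = 0) (hmono : Monotone f)
    (hsubadd : ∀ x y, f (x ⊔ y) ≤ f x + f y) : PseudoMetricSpace α where
  dist x y := f (x ∆ y)
  dist_self x := by rw [symmDiff_self, hbot]
  dist_comm x y := by rw [symmDiff_comm]
  dist_triangle x y z := (hmono (symmDiff_triangle x y z)).trans (hsubadd _ _)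

theorem bestB_approx_general (hbot : f ⊥ = 0) (hmono : Monotone f)
    (hsubadd : ∀ x y, f (x ⊔ y) ≤ f x + f y)
    {ι : Type*} {s : Finset ι} (hs : s.Nonempty) (b : ι → α) (a : α) :
    #s * s.inf' hs (fun i => ∑ j ∈ s, f (b i ∆ b j)) ≤
      2 * ((#s : ℝ) - 1) * ∑ i ∈ s, f (a ∆ b i) :=
  letI := symmDiffPseudoMetricSpace hbot hmono hsubadd
  card_mul_inf'_sum_dist_le b a hs

end SymmDiff

/-- Best-B guarantee: for a positive polymatroid `f`, sets `B₁, …, B_m` (`m ≥ 1`),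
and `F(A) = Σᵢ f(A △ Bᵢ)`, we have `m · minᵢ F(Bᵢ) ≤ 2(m − 1) · F(A)` for every
`A ⊆ V`; i.e., the best of the `Bᵢ` is a `(2 − 2/m)`-approximate minimizer. -/
theorem bestB_approx
    {V : Type*} [Fintype V] [DecidableEq V] (f : Finset V → ℝ)
    (hpos : ∀ A : Finset V, A ≠ ∅ → 0 < f A)
    (hnorm : f ∅ = 0)
    (hmono : ∀ X Y : Finset V, X ⊆ Y → f X ≤ f Y)
    (hsubmod : ∀ X Y : Finset V, f (X ∪ Y) + f (X ∩ Y) ≤ f X + f Y)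
    (m : ℕ) (hm : 0 < m) (B : Fin m → Finset V) :
    let F : Finset V → ℝ := fun A => ∑ i, f ((A \ B i) ∪ (B i \ A))
    ∀ A : Finset V,
      (m : ℝ) * (Finset.univ.inf' (Finset.univ_nonempty_iff.mpr ⟨⟨0, hm⟩⟩)
        fun i => F (B i)) ≤ 2 * ((m : ℝ) - 1) * F A := by
  intro _ A
  have approx := bestB_approx_general hnorm hmono
    (map_sup_le_add_of_submodular hnorm hmono hsubmod) (univ_nonempty_iff.mpr ⟨⟨0, hm⟩⟩) B A
  rwa [card_fin] at approx
end

section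
/- ('Shrink' superdifferential bound.) Let V be a finite set and let f : 2^V → ℝ be submodular. For all A, Y ⊆ V: f(Y) ≤ f(A) − Σ_{j ∈ A \ Y} ( f(A) − f(A \ {j}) ) + Σ_{j ∈ Y \ A} ( f({j}) − f(∅) ). Moreover this modular upper bound is tight at Y = A. -/
/-!
Pass from `A` to `Y` through `A ∩ Y`, first removing the elements of `A \ Y` one at a time and then
adding those of `Y \ A` one at a time. By diminishing returns, removing `j` from a subset of `A`
loses at least `f A - f (A \ {j})`, and adding `j` to a set gains at most `f {j} - f ∅`.
-/

/-- Submodularity, for functions on an arbitrary lattice. For set functions the lattice is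
`Finset V`, where `⊔` and `⊓` unfold to `∪` and `∩`. -/
def IsSubmodular {α G : Type*} [Lattice α] [Add G] [LE G] (f : α → G) : Prop :=
  ∀ a b, f (a ⊔ b) + f (a ⊓ b) ≤ f a + f b

namespace IsSubmodular

variable {V G : Type*} [DecidableEq V] [AddCommGroup G] [PartialOrder G] [IsOrderedAddMonoid G]
  {f : Finset V → G} {S T U : Finset V} {j : V}

theorem insert_sub_le_insert_sub (hf : IsSubmodular f) (hST : S ⊆ T) (hj : j ∉ T) :
    f (insert j T) - f T ≤ f (insert j S) - f S := by
  have hunion : insert j S ∪ T = insert j T := by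
    rw [Finset.insert_union, Finset.union_eq_right.2 hST]
  have hinter : insert j S ∩ T = S := by
    rw [Finset.insert_inter_of_notMem hj, Finset.inter_eq_left.2 hST]
  have hsub : f (insert j S ∪ T) + f (insert j S ∩ T) ≤ f (insert j S) + f T := hf _ _
  rw [hunion, hinter] at hsub
  rwa [sub_le_sub_iff]

theorem sub_erase_le_sub_erase (hf : IsSubmodular f) (hST : S ⊆ T) (hj : j ∈ S) :
    f T - f (T.erase j) ≤ f S - f (S.erase j) := by
  simpa only [Finset.insert_erase hj, Finset.insert_erase (hST hj)] using
    hf.insert_sub_le_insert_sub (Finset.erase_subset_erase j hST) (Finset.notMem_erase j T)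

theorem union_le_add_sum (hf : IsSubmodular f) (hST : S ⊆ T) (hTU : Disjoint T U) :
    f (T ∪ U) ≤ f T + ∑ j ∈ U, (f (insert j S) - f S) := by
  induction U using Finset.induction_on with
  | empty => simp
  | insert j U hjU ih =>
    obtain ⟨hjT, hTU⟩ := Finset.disjoint_insert_right.1 hTU
    have hgain : f (insert j (T ∪ U)) - f (T ∪ U) ≤ f (insert j S) - f S :=
      hf.insert_sub_le_insert_sub (hST.trans Finset.subset_union_left) (by simp [hjT, hjU])
    calc f (T ∪ insert j U) = (f (insert j (T ∪ U)) - f (T ∪ U)) + f (T ∪ U) := by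
          rw [Finset.union_insert, sub_add_cancel]
      _ ≤ (f (insert j S) - f S) + (f T + ∑ i ∈ U, (f (insert i S) - f S)) :=
          add_le_add hgain (ih hTU)
      _ = f T + ∑ i ∈ insert j U, (f (insert i S) - f S) := by
          rw [Finset.sum_insert hjU, add_left_comm]

theorem sdiff_le_sub_sum (hf : IsSubmodular f) (hST : S ⊆ T) (hUS : U ⊆ S) :
    f (S \ U) ≤ f S - ∑ j ∈ U, (f T - f (T.erase j)) := by
  induction U using Finset.induction_on with
  | empty => simp
  | insert j U hjU ih =>
    obtain ⟨hjS, hUS⟩ := Finset.insert_subset_iff.1 hUS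
    have hloss : f T - f (T.erase j) ≤ f (S \ U) - f ((S \ U).erase j) :=
      hf.sub_erase_le_sub_erase (Finset.sdiff_subset.trans hST) (Finset.mem_sdiff.2 ⟨hjS, hjU⟩)
    calc f (S \ insert j U) = f (S \ U) - (f (S \ U) - f ((S \ U).erase j)) := by
          rw [Finset.sdiff_insert, sub_sub_cancel]
      _ ≤ (f S - ∑ i ∈ U, (f T - f (T.erase i))) - (f T - f (T.erase j)) :=
          sub_le_sub (ih hUS) hloss
      _ = f S - ∑ i ∈ insert j U, (f T - f (T.erase i)) := by
          rw [Finset.sum_insert hjU, sub_sub, add_comm]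

end IsSubmodular

theorem shrink_superdifferential_bound_general
    {V G : Type*} [DecidableEq V] [AddCommGroup G] [PartialOrder G] [IsOrderedAddMonoid G]
    {f : Finset V → G} (hf : IsSubmodular f) :
    (∀ A Y : Finset V,
      f Y ≤ f A - (∑ j ∈ A \ Y, (f A - f (A.erase j)))
              + (∑ j ∈ Y \ A, (f {j} - f ∅))) ∧
    (∀ A : Finset V,
      f A - (∑ j ∈ A \ A, (f A - f (A.erase j)))
          + (∑ j ∈ A \ A, (f {j} - f ∅)) = f A) := by
  refine ⟨fun A Y => ?_, fun A => by simp⟩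
  have hremove : f (A ∩ Y) ≤ f A - ∑ j ∈ A \ Y, (f A - f (A.erase j)) := by
    simpa only [Finset.sdiff_sdiff_self_left] using
      hf.sdiff_le_sub_sum subset_rfl (Finset.sdiff_subset (s := A) (t := Y))
  have hdisj : Disjoint (A ∩ Y) (Y \ A) :=
    Finset.disjoint_sdiff.mono_left Finset.inter_subset_left
  have hadd : f ((A ∩ Y) ∪ (Y \ A)) ≤ f (A ∩ Y) + ∑ j ∈ Y \ A, (f {j} - f ∅) := by
    simpa only [insert_empty_eq] using hf.union_le_add_sum (Finset.empty_subset _) hdisj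
  calc f Y = f ((A ∩ Y) ∪ (Y \ A)) := by
        rw [Finset.inter_comm, Finset.union_comm, Finset.sdiff_union_inter]
    _ ≤ f (A ∩ Y) + ∑ j ∈ Y \ A, (f {j} - f ∅) := hadd
    _ ≤ f A - (∑ j ∈ A \ Y, (f A - f (A.erase j))) + ∑ j ∈ Y \ A, (f {j} - f ∅) := by
        gcongr

/-- "Shrink" superdifferential modular upper bound for a submodular function:
`f(Y) ≤ f(A) − Σ_{j ∈ A\Y} (f(A) − f(A\{j})) + Σ_{j ∈ Y\A} (f({j}) − f(∅))`,
with equality (tightness) at `Y = A`. -/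
theorem shrink_superdifferential_bound
    {V : Type*} [Fintype V] [DecidableEq V] (f : Finset V → ℝ)
    (hsubmod : ∀ X Y : Finset V, f (X ∪ Y) + f (X ∩ Y) ≤ f X + f Y) :
    (∀ A Y : Finset V,
      f Y ≤ f A - (∑ j ∈ A \ Y, (f A - f (A.erase j)))
              + (∑ j ∈ Y \ A, (f {j} - f ∅))) ∧
    (∀ A : Finset V,
      f A - (∑ j ∈ A \ A, (f A - f (A.erase j)))
          + (∑ j ∈ A \ A, (f {j} - f ∅)) = f A) :=
  shrink_superdifferential_bound_general hsubmod
end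

section
/- (Approximation transfer for maximization via the split objective.) Let V be a finite set, let f₁, …, f_m be positive polymatroid functions on 2^V, let B₁, …, B_m ⊆ V, and let 𝒞 ⊆ 2^V be nonempty. Define F(A) = Σ_{i=1}^m f_i(A △ B_i) and F̄(A) = Σ_{i=1}^m [ f_i(A \ B_i) + f_i(B_i \ A) ]. If α ∈ [0, 1] and Ā ∈ 𝒞 satisfies F̄(Ā) ≥ α · max_{A ∈ 𝒞} F̄(A), then F(Ā) ≥ (α/2) · max_{A ∈ 𝒞} F(A). -/
/-!
The symmetric difference `a ∆ b` is the disjoint join of `a \ b` and `b \ a`. Subadditivity bounds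
its value by the sum of the values of the two parts, and monotonicity bounds each part by the whole.
Hence `F ≤ F̄ ≤ 2 F`, and replacing one objective by the other costs at most a factor of `2`.
-/

open scoped symmDiff

section ApproxMax

variable {β R : Type*}

/-- `b` is an `α`-approximate maximizer of `F` on `s`, the multiplicative relaxation of `IsMaxOn`.
As for `IsMaxOn`, the point `b` is not required to lie in `s`. -/
def IsApproxMaxOn [Mul R] [LE R] (α : R) (F : β → R) (s : Set β) (b : β) : Prop :=
  ∀ a ∈ s, α * F a ≤ F b

theorem IsApproxMaxOn.of_le_of_le_mul [Semifield R] [LinearOrder R] [IsStrictOrderedRing R]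
    {F G : β → R} {s : Set β} {b : β} {α c : R} (hG : IsApproxMaxOn α G s b)
    (hα : 0 ≤ α) (hc : 0 < c) (hFG : ∀ a ∈ s, F a ≤ G a) (hGF : G b ≤ c * F b) :
    IsApproxMaxOn (α / c) F s b := by
  intro a ha
  rw [div_mul_eq_mul_div, div_le_iff₀' hc]
  calc
    α * F a ≤ α * G a := mul_le_mul_of_nonneg_left (hFG a ha) hα
    _ ≤ G b := hG a ha
    _ ≤ c * F b := hGF

end ApproxMax

theorem map_sup_le_add_of_disjoint_of_submodular {β M : Type*} [Lattice β] [OrderBot β]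
    [AddZeroClass M] [LE M] {f : β → M} (hbot : f ⊥ = 0)
    (hsubmod : ∀ x y, f (x ⊔ y) + f (x ⊓ y) ≤ f x + f y) {x y : β} (hxy : Disjoint x y) :
    f (x ⊔ y) ≤ f x + f y := by
  simpa only [hxy.eq_bot, hbot, add_zero] using hsubmod x y

section Objectives

variable {ι β M : Type*} [Fintype ι] [GeneralizedBooleanAlgebra β] [AddCommMonoid M]

/-- The objective `F(a) = Σᵢ fᵢ(a ∆ Bᵢ)`. -/
def symmDiffObjective (f : ι → β → M) (B : ι → β) (a : β) : M :=
  ∑ i, f i (a ∆ B i)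

/-- The split objective `F̄(a) = Σᵢ [fᵢ(a \ Bᵢ) + fᵢ(Bᵢ \ a)]`, a surrogate for
`symmDiffObjective` that evaluates the two halves of each symmetric difference separately. -/
def splitObjective (f : ι → β → M) (B : ι → β) (a : β) : M :=
  ∑ i, (f i (a \ B i) + f i (B i \ a))

variable [PartialOrder M] [IsOrderedAddMonoid M] {f : ι → β → M}

theorem symmDiffObjective_le_splitObjective
    (hsub : ∀ i x y, Disjoint x y → f i (x ⊔ y) ≤ f i x + f i y) (B : ι → β) (a : β) :
    symmDiffObjective f B a ≤ splitObjective f B a :=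
  Finset.sum_le_sum fun i _ => hsub i _ _ disjoint_sdiff_sdiff

theorem splitObjective_le_two_nsmul_symmDiffObjective (hmono : ∀ i, Monotone (f i)) (B : ι → β)
    (a : β) : splitObjective f B a ≤ 2 • symmDiffObjective f B a := by
  rw [symmDiffObjective, Finset.smul_sum]
  refine Finset.sum_le_sum fun i _ => ?_
  rw [two_nsmul]
  exact add_le_add (hmono i le_sup_left) (hmono i le_sup_right)

end Objectives

theorem union_split_max_transfer_general {ι β R : Type*} [Fintype ι] [GeneralizedBooleanAlgebra β]
    [Semifield R] [LinearOrder R] [IsStrictOrderedRing R] {f : ι → β → R} {B : ι → β}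
    (hmono : ∀ i, Monotone (f i))
    (hsub : ∀ i x y, Disjoint x y → f i (x ⊔ y) ≤ f i x + f i y)
    {s : Set β} {α : R} (hα : 0 ≤ α) {b : β} (hb : IsApproxMaxOn α (splitObjective f B) s b) :
    IsApproxMaxOn (α / 2) (symmDiffObjective f B) s b := by
  refine hb.of_le_of_le_mul hα two_pos
    (fun a _ => symmDiffObjective_le_splitObjective hsub B a) ?_
  simpa only [nsmul_eq_mul, Nat.cast_ofNat] using
    splitObjective_le_two_nsmul_symmDiffObjective hmono B b

/-- Approximation transfer for maximization via the split objective: if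
`Ā ∈ 𝒞` is an `α`-approximate maximizer of `F̄(A) = Σᵢ [fᵢ(A \ Bᵢ) + fᵢ(Bᵢ \ A)]`
over `𝒞`, then `Ā` is an `(α/2)`-approximate maximizer of
`F(A) = Σᵢ fᵢ(A △ Bᵢ)` over `𝒞`, for positive polymatroids `fᵢ`. -/
theorem union_split_max_transfer
    {V : Type*} [Fintype V] [DecidableEq V]
    (m : ℕ) (f : Fin m → Finset V → ℝ) (B : Fin m → Finset V)
    (hpos : ∀ i, ∀ A : Finset V, A ≠ ∅ → 0 < f i A)
    (hnorm : ∀ i, f i ∅ = 0)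
    (hmono : ∀ i, ∀ X Y : Finset V, X ⊆ Y → f i X ≤ f i Y)
    (hsubmod : ∀ i, ∀ X Y : Finset V, f i (X ∪ Y) + f i (X ∩ Y) ≤ f i X + f i Y)
    (𝒞 : Set (Finset V)) (h𝒞 : 𝒞.Nonempty)
    (α : ℝ) (hα0 : 0 ≤ α) (hα1 : α ≤ 1)
    (Abar : Finset V) (hAbar : Abar ∈ 𝒞)
    (happrox : ∀ A ∈ 𝒞,
      α * (∑ i, (f i (A \ B i) + f i (B i \ A))) ≤
      (∑ i, (f i (Abar \ B i) + f i (B i \ Abar)))) :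
    ∀ A ∈ 𝒞,
      (α / 2) * (∑ i, f i ((A \ B i) ∪ (B i \ A))) ≤
      (∑ i, f i ((Abar \ B i) ∪ (B i \ Abar))) :=
  union_split_max_transfer_general hmono
    (fun i _ _ => map_sup_le_add_of_disjoint_of_submodular (hnorm i) (hsubmod i)) hα0 happrox
end
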